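/- Let f : ℝ^n → ℝ^m, let Ω ⊆ ℝ^n, and let Y ⊂ ℝ^m be a nonempty finite set whose elements are pairwise incomparable (for all r¹, r² ∈ Y, neither r¹ ≤ r² nor r² ≤ r¹). If x̂ ∈ Ω is the unique minimizer of ψ^Do_Y over Ω, i.e., ψ^Do_Y(x̂) < ψ^Do_Y(x) for every x ∈ Ω with x ≠ x̂, then x̂ is Pareto optimal: there is no x ∈ Ω with f(x) ≤ f(x̂). -/

import Mathlib

/-- `r` dominates `y` in the Pareto sense: `r ≤ y` componentwise with at least
one strict inequality. -/
def paretoLE {m : ℕ} (r y : Fin m → ℝ) : Prop :=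
  (∀ i, r i ≤ y i) ∧ ∃ i, r i < y i

open Classical in
/-- The single-objective dominance move function `ψ^Do_Y`. -/
noncomputable def psiDo {n m : ℕ} (f : (Fin n → ℝ) → (Fin m → ℝ))
    (Y : Finset (Fin m → ℝ)) (hY : Y.Nonempty) (x : Fin n → ℝ) : ℝ :=
  if ∃ r ∈ Y, paretoLE r (f x) then
    Y.inf' hY fun r => ∑ i, max 0 (f x i - r i)
  else
    - Y.inf' hY fun r => ∑ i, max 0 (r i - f x i)

/-!
The dominance move value depends on `x` only through `f x`, and it is monotone in `f x`: lowering
an objective vector `y` shrinks its excess over each `r ∈ Y` and enlarges the excess of each `r`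
over `y`. The two branches of the definition fit together because domination by `Y` is inherited
by larger vectors and the dominated branch is nonnegative while the other one is nonpositive.
A unique minimizer of a monotone function of `f` is minimal for `f`.
-/

section TotalExcess

variable {ι R : Type*} [Fintype ι] [AddCommGroup R] [LinearOrder R]

/-- The total amount by which the coordinates of `y` exceed those of `r`: the least `ℓ¹`-cost of
moving `y` to a vector that is at most `r` in every coordinate. -/
def totalExcess (y r : ι → R) : R :=
  ∑ i, (y i - r i)⁺

variable [IsOrderedAddMonoid R]

theorem totalExcess_nonneg (y r : ι → R) : 0 ≤ totalExcess y r :=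
  Finset.sum_nonneg fun i _ => posPart_nonneg (y i - r i)

theorem totalExcess_le_totalExcess {y y' r r' : ι → R} (hy : y ≤ y') (hr : r' ≤ r) :
    totalExcess y r ≤ totalExcess y' r' :=
  Finset.sum_le_sum fun i _ => posPart_mono (sub_le_sub (hy i) (hr i))

end TotalExcess

section DominanceMove

variable {ι R : Type*} [Fintype ι] [AddCommGroup R] [LinearOrder R]

open Classical in
/-- The signed dominance move value of an objective vector `y` relative to the reference set `Y`.
It is `ψ^Do_Y` as a function on objective space, with domination expressed by the strict order
`<` of the product `ι → R`. -/
noncomputable def dominanceMove (Y : Finset (ι → R)) (hY : Y.Nonempty) (y : ι → R) : R :=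
  if ∃ r ∈ Y, r < y then
    Y.inf' hY fun r => totalExcess y r
  else
    -Y.inf' hY fun r => totalExcess r y

theorem dominanceMove_of_exists_lt {Y : Finset (ι → R)} (hY : Y.Nonempty) {y : ι → R}
    (h : ∃ r ∈ Y, r < y) : dominanceMove Y hY y = Y.inf' hY fun r => totalExcess y r :=
  if_pos h

theorem dominanceMove_of_not_exists_lt {Y : Finset (ι → R)} (hY : Y.Nonempty) {y : ι → R}
    (h : ¬ ∃ r ∈ Y, r < y) : dominanceMove Y hY y = -Y.inf' hY fun r => totalExcess r y :=
  if_neg h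

variable [IsOrderedAddMonoid R]

theorem dominanceMove_nonneg {Y : Finset (ι → R)} (hY : Y.Nonempty) {y : ι → R}
    (h : ∃ r ∈ Y, r < y) : 0 ≤ dominanceMove Y hY y := by
  rw [dominanceMove_of_exists_lt hY h]
  exact Finset.le_inf' _ _ fun r _ => totalExcess_nonneg y r

theorem dominanceMove_nonpos {Y : Finset (ι → R)} (hY : Y.Nonempty) {y : ι → R}
    (h : ¬ ∃ r ∈ Y, r < y) : dominanceMove Y hY y ≤ 0 := by
  rw [dominanceMove_of_not_exists_lt hY h, neg_nonpos]
  exact Finset.le_inf' _ _ fun r _ => totalExcess_nonneg r y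

theorem monotone_dominanceMove (Y : Finset (ι → R)) (hY : Y.Nonempty) :
    Monotone (dominanceMove Y hY) := by
  intro y z hyz
  by_cases hy : ∃ r ∈ Y, r < y
  · have hz : ∃ r ∈ Y, r < z := hy.imp fun r hr => ⟨hr.1, hr.2.trans_le hyz⟩
    rw [dominanceMove_of_exists_lt hY hy, dominanceMove_of_exists_lt hY hz]
    exact Finset.inf'_mono_fun fun r _ => totalExcess_le_totalExcess hyz le_rfl
  by_cases hz : ∃ r ∈ Y, r < z
  · exact (dominanceMove_nonpos hY hy).trans (dominanceMove_nonneg hY hz)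
  · rw [dominanceMove_of_not_exists_lt hY hy, dominanceMove_of_not_exists_lt hY hz]
    exact neg_le_neg <| Finset.inf'_mono_fun fun r _ => totalExcess_le_totalExcess le_rfl hyz

end DominanceMove

theorem minimalFor_of_monotone_of_forall_ne_lt {X α β : Type*} [Preorder α] [Preorder β]
    {g : α → β} (hg : Monotone g) {f : X → α} {Ω : Set X} {xhat : X} (hxhat : xhat ∈ Ω)
    (hmin : ∀ x ∈ Ω, x ≠ xhat → g (f xhat) < g (f x)) : MinimalFor (· ∈ Ω) f xhat := by
  refine ⟨hxhat, fun x hx hle => ?_⟩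
  have hx_eq : x = xhat := by_contra fun hne => (hmin x hx hne).not_ge (hg hle)
  rw [hx_eq]

theorem paretoLE_iff_lt {m : ℕ} {r y : Fin m → ℝ} : paretoLE r y ↔ r < y :=
  Pi.lt_def.symm

theorem psiDo_eq_dominanceMove {n m : ℕ} (f : (Fin n → ℝ) → (Fin m → ℝ))
    (Y : Finset (Fin m → ℝ)) (hY : Y.Nonempty) (x : Fin n → ℝ) :
    psiDo f Y hY x = dominanceMove Y hY (f x) := by
  classical
  simp only [psiDo, dominanceMove, totalExcess, posPart_def, max_comm (0 : ℝ)]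
  exact if_congr (by simp only [paretoLE_iff_lt]) rfl rfl

theorem psiDo_unique_min_pareto_optimal_general {X ι R : Type*} [Fintype ι] [AddCommGroup R]
    [LinearOrder R] [IsOrderedAddMonoid R] (f : X → ι → R) (Ω : Set X)
    (Y : Finset (ι → R)) (hY : Y.Nonempty) (xhat : X) (hxhat : xhat ∈ Ω)
    (hmin : ∀ x ∈ Ω, x ≠ xhat → dominanceMove Y hY (f xhat) < dominanceMove Y hY (f x)) :
    MinimalFor (· ∈ Ω) f xhat :=
  minimalFor_of_monotone_of_forall_ne_lt (monotone_dominanceMove Y hY) hxhat hmin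

/-- the unique minimizer of `ψ^Do_Y` over `Ω` is Pareto optimal. -/
theorem psiDo_unique_min_pareto_optimal {n m : ℕ} (f : (Fin n → ℝ) → (Fin m → ℝ))
    (Ω : Set (Fin n → ℝ)) (Y : Finset (Fin m → ℝ)) (hY : Y.Nonempty)
    (hinc : ∀ r1 ∈ Y, ∀ r2 ∈ Y, ¬ paretoLE r1 r2 ∧ ¬ paretoLE r2 r1)
    (xhat : Fin n → ℝ) (hxhat : xhat ∈ Ω)
    (hmin : ∀ x ∈ Ω, x ≠ xhat → psiDo f Y hY xhat < psiDo f Y hY x) :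
    ¬ ∃ x ∈ Ω, paretoLE (f x) (f xhat) := by
  simp only [psiDo_eq_dominanceMove] at hmin
  have hminimal := psiDo_unique_min_pareto_optimal_general f Ω Y hY xhat hxhat hmin
  exact fun ⟨_, hx, hlt⟩ => hminimal.not_prop_of_lt (paretoLE_iff_lt.mp hlt) hx
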